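/- arXiv:1907.02132 — 2 statements merged into one kernel-verified Lean document; each statement's English description precedes it below -/
import Mathlib

section
/- The map ranked : I_α → S↓, which sends β∈I_α to the decreasing rearrangement of the sequence of masses (Leb(U), U∈β), is continuous from (I_α, d_α) to (S↓, ℓ¹), where S↓ = {(x_k)_{k≥1} : x_1 ≥ x_2 ≥ ⋯ ≥ 0 and Σ_{k≥1} x_k < ∞} is equipped with the ℓ¹ metric. -/
/-!
The argument is a layer-cake computation. For nonincreasing sequences `s, t` the sets
`{k | r < s k}` and `{k | r < t k}` are initial segments of `ℕ`, so integrating over the level `r`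
turns `∑ k, (s k - t k)⁺` into `∫ (N_β(r) - N_γ(r))⁺ dr`, where `N_β(r)` and `N_γ(r)` count the
blocks of mass exceeding `r`. Given a correspondence `(U_j, V_j)`, the count `N_β(r)` exceeds
`N_γ(r)` by at most the number of `j` with `Leb(V_j) ≤ r < Leb(U_j)` plus the number of unmatched
blocks of `β` of mass exceeding `r` (`card_blocks_le`). Integrating back over `r` gives
`∑ k, (s k - t k)⁺ ≤ ∑ j, (Leb(U_j) - Leb(V_j))⁺ + ‖β‖ - ∑ j, Leb(U_j)`
(`tsum_ofReal_sub_le`), which is at most the Hausdorff distortion. The same holds with the two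
partitions exchanged, so the `ℓ¹` distance of the ranked sequences is at most twice the distortion
of any correspondence. The `α`-distortion is at least the
Hausdorff distortion, and the diversity terms play no further part.
-/



open MeasureTheory Filter Topology Set

/-- An interval partition of `[0, L]`: a set of disjoint open subintervals whose
complement in `[0, L]` is Lebesgue-null. A block is encoded by its endpoint pair
`(a, b)` with `a < b`, representing the open interval `(a, b)`. -/
structure IntervalPartition where
  length : ℝ
  length_nonneg : 0 ≤ length
  blocks : Set (ℝ × ℝ)
  blocks_lt : ∀ p ∈ blocks, p.1 < p.2
  blocks_sub : ∀ p ∈ blocks, 0 ≤ p.1 ∧ p.2 ≤ length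
  blocks_disjoint : ∀ p ∈ blocks, ∀ q ∈ blocks, p ≠ q →
    Set.Ioo p.1 p.2 ∩ Set.Ioo q.1 q.2 = ∅
  compl_null : volume (Set.Icc 0 length \ ⋃ p ∈ blocks, Set.Ioo p.1 p.2) = 0

namespace IntervalPartition

/-- The mass (Lebesgue measure) of a block `(a, b)`. -/
def mass (p : ℝ × ℝ) : ℝ := p.2 - p.1

/-- The complement `C_β = [0, ‖β‖] \ ⋃_{U ∈ β} U`. -/
def cset (β : IntervalPartition) : Set ℝ :=
  Set.Icc 0 β.length \ ⋃ p ∈ β.blocks, Set.Ioo p.1 p.2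

/-- A correspondence between `β` and `γ`: a finite sequence of pairs of blocks,
strictly increasing in the left-to-right order in each coordinate. -/
def IsCorrespondence (β γ : IntervalPartition) (n : ℕ)
    (c : Fin n → (ℝ × ℝ) × (ℝ × ℝ)) : Prop :=
  (∀ j, (c j).1 ∈ β.blocks ∧ (c j).2 ∈ γ.blocks) ∧
  (∀ j k : Fin n, j < k → (c j).1.2 ≤ (c k).1.1 ∧ (c j).2.2 ≤ (c k).2.1)

/-- The Hausdorff distortion of a correspondence: the maximum of quantities
(i) and (ii) of the paper. -/
noncomputable def hausDistortion (β γ : IntervalPartition) (n : ℕ)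
    (c : Fin n → (ℝ × ℝ) × (ℝ × ℝ)) : ℝ :=
  max ((∑ j : Fin n, |mass (c j).1 - mass (c j).2|) + β.length - ∑ j : Fin n, mass (c j).1)
      ((∑ j : Fin n, |mass (c j).1 - mass (c j).2|) + γ.length - ∑ j : Fin n, mass (c j).2)

/-- The metric `d_H'`: infimum of the Hausdorff distortion over all correspondences. -/
noncomputable def dHp (β γ : IntervalPartition) : ℝ :=
  sInf {x | ∃ n, ∃ c : Fin n → (ℝ × ℝ) × (ℝ × ℝ),
    IsCorrespondence β γ n c ∧ x = hausDistortion β γ n c}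

/-- The metric `d_H`: the Hausdorff distance between the complements. -/
noncomputable def dH (β γ : IntervalPartition) : ℝ :=
  Metric.hausdorffDist β.cset γ.cset

/-- The number of blocks of mass `> h` ending at or before `t`. -/
noncomputable def divCount (β : IntervalPartition) (t h : ℝ) : ℕ :=
  Set.ncard {p : ℝ × ℝ | p ∈ β.blocks ∧ h < p.2 - p.1 ∧ p.2 ≤ t}

/-- `β` has `a`-diversity `d` at `t`:
`Γ(1-a) · lim_{h↓0} h^a · #{(x,y) ∈ β : y - x > h, y ≤ t} = d`. -/
def HasDiversity (a : ℝ) (β : IntervalPartition) (t d : ℝ) : Prop :=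
  Tendsto (fun h : ℝ => Real.Gamma (1 - a) * h ^ a * (divCount β t h : ℝ))
    (𝓝[>] 0) (𝓝 d)

/-- The `a`-diversity property: the diversity limit exists at every `t ∈ [0, ‖β‖]`. -/
def HasDiversityProp (a : ℝ) (β : IntervalPartition) : Prop :=
  ∀ t ∈ Set.Icc 0 β.length, ∃ d, HasDiversity a β t d

/-- The diversity function `𝒟_β(t)` (the value of the limit, when it exists). -/
noncomputable def diversity (a : ℝ) (β : IntervalPartition) (t : ℝ) : ℝ :=
  limUnder (𝓝[>] (0:ℝ)) (fun h : ℝ => Real.Gamma (1 - a) * h ^ a * (divCount β t h : ℝ))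

/-- The total diversity `𝒟_β(∞) = 𝒟_β(‖β‖)`. -/
noncomputable def totalDiversity (a : ℝ) (β : IntervalPartition) : ℝ :=
  diversity a β β.length

/-- The diversity `𝒟_β(U)` of a block `U`, evaluated at its midpoint. -/
noncomputable def blockDiversity (a : ℝ) (β : IntervalPartition) (p : ℝ × ℝ) : ℝ :=
  diversity a β ((p.1 + p.2) / 2)

/-- The `a`-distortion of a correspondence: the maximum of quantities (i)-(iv). -/
noncomputable def alphaDistortion (a : ℝ) (β γ : IntervalPartition) (n : ℕ)
    (c : Fin n → (ℝ × ℝ) × (ℝ × ℝ)) : ℝ :=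
  max (hausDistortion β γ n c)
    (max (⨆ j : Fin n, |blockDiversity a β (c j).1 - blockDiversity a γ (c j).2|)
         |totalDiversity a β - totalDiversity a γ|)

/-- The metric `d_α`: infimum of the `a`-distortion over all correspondences. -/
noncomputable def dA (a : ℝ) (β γ : IntervalPartition) : ℝ :=
  sInf {x | ∃ n, ∃ c : Fin n → (ℝ × ℝ) × (ℝ × ℝ),
    IsCorrespondence β γ n c ∧ x = alphaDistortion a β γ n c}

end IntervalPartition

/-- A point of the space `J`: an interval partition `η` together with an increasing,
right-continuous function `f` that is constant on every block of `η`, on `[‖η‖, ∞)`,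
and (as `f` is defined on `[0, ∞]`) on `(-∞, 0]`. -/
structure JPoint where
  part : IntervalPartition
  f : ℝ → ℝ
  f_nonneg : ∀ t, 0 ≤ f t
  f_mono : Monotone f
  f_rightCont : ∀ t, ContinuousWithinAt f (Set.Ici t) t
  f_const_block : ∀ p ∈ part.blocks, ∀ s ∈ Set.Ioo p.1 p.2, ∀ t ∈ Set.Ioo p.1 p.2, f s = f t
  f_const_top : ∀ t, part.length ≤ t → f t = f part.length
  f_const_neg : ∀ t, t ≤ (0:ℝ) → f t = f 0

/-- The distortion of a correspondence between two points of `J`: as the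
`a`-distortion, but with `f`, `g` in place of the diversity functions. -/
noncomputable def jDistortion (x y : JPoint) (n : ℕ)
    (c : Fin n → (ℝ × ℝ) × (ℝ × ℝ)) : ℝ :=
  max (IntervalPartition.hausDistortion x.part y.part n c)
    (max (⨆ j : Fin n, |x.f (((c j).1.1 + (c j).1.2) / 2) - y.f (((c j).2.1 + (c j).2.2) / 2)|)
         |x.f x.part.length - y.f y.part.length|)

/-- The metric `d_J` on `J`. -/
noncomputable def dJ (x y : JPoint) : ℝ :=
  sInf {r | ∃ n, ∃ c : Fin n → (ℝ × ℝ) × (ℝ × ℝ),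
    IntervalPartition.IsCorrespondence x.part y.part n c ∧ r = jDistortion x y n c}

open IntervalPartition in
/-- `s` is the decreasing rearrangement of the block masses of `β` (padded by
zeros): `s` is nonincreasing, nonnegative, and for every `r > 0` the number of
terms of `s` exceeding `r` equals the (finite) number of blocks of `β` of mass
exceeding `r`. -/
def IsRankedMassSeq (β : IntervalPartition) (s : ℕ → ℝ) : Prop :=
  Antitone s ∧ (∀ k, 0 ≤ s k) ∧
  ∀ r : ℝ, 0 < r →
    {k : ℕ | r < s k}.Finite ∧ {p : ℝ × ℝ | p ∈ β.blocks ∧ r < mass p}.Finite ∧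
    {k : ℕ | r < s k}.ncard = {p : ℝ × ℝ | p ∈ β.blocks ∧ r < mass p}.ncard

open scoped ENNReal

namespace IntervalPartition

/-! ### Layer-cake formulas for families of intervals -/

/-- At a fixed level `r`, summing interval indicators counts the intervals containing `r`. -/
lemma tsum_indicator_Ico {ι : Type*} (f g : ι → ℝ) (r : ℝ) :
    ∑' i, (Ico (f i) (g i)).indicator (1 : ℝ → ℝ≥0∞) r
      = (({i | f i ≤ r ∧ r < g i} : Set ι).encard : ℝ≥0∞) := by
  rw [← ENNReal.tsum_set_one, tsum_subtype _ (fun _ : ι => (1 : ℝ≥0∞))]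
  refine tsum_congr fun i => ?_
  by_cases h : f i ≤ r ∧ r < g i
  · rw [indicator_of_mem (show r ∈ Ico (f i) (g i) from h),
      indicator_of_mem (show i ∈ {i | f i ≤ r ∧ r < g i} from h)]
    rfl
  · rw [indicator_of_notMem (show r ∉ Ico (f i) (g i) from h),
      indicator_of_notMem (show i ∉ {i | f i ≤ r ∧ r < g i} from h)]

lemma measurable_indicator_Ico (u v : ℝ) :
    Measurable ((Ico u v).indicator (1 : ℝ → ℝ≥0∞)) :=
  measurable_one.indicator measurableSet_Ico

/-- Layer-cake formula: integrating over the level `r` recovers the sum of the lengths. -/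
lemma lintegral_tsum_indicator_Ico {ι : Type*} [Countable ι] (f g : ι → ℝ) :
    ∫⁻ r, ∑' i, (Ico (f i) (g i)).indicator (1 : ℝ → ℝ≥0∞) r
      = ∑' i, ENNReal.ofReal (g i - f i) := by
  rw [lintegral_tsum fun i => (measurable_indicator_Ico _ _).aemeasurable]
  refine tsum_congr fun i => ?_
  rw [lintegral_indicator_one measurableSet_Ico, Real.volume_Ico]

/-! ### Blocks and correspondences -/

lemma blocks_pairwiseDisjoint (β : IntervalPartition) :
    β.blocks.PairwiseDisjoint fun p => Ioo p.1 p.2 := fun p hp q hq hpq =>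
  disjoint_iff_inter_eq_empty.2 (β.blocks_disjoint p hp q hq hpq)

lemma blocks_countable (β : IntervalPartition) : β.blocks.Countable :=
  β.blocks_pairwiseDisjoint.countable_of_isOpen (fun _ _ => isOpen_Ioo)
    fun p hp => nonempty_Ioo.2 (β.blocks_lt p hp)

lemma tsum_mass_le (β : IntervalPartition) :
    ∑' p : β.blocks, ENNReal.ofReal (mass p) ≤ ENNReal.ofReal β.length := by
  have h := measure_biUnion (μ := volume) β.blocks_countable β.blocks_pairwiseDisjoint
    (fun p _ => measurableSet_Ioo)
  simp only [Real.volume_Ioo] at h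
  unfold mass
  rw [← h, ← sub_zero β.length, ← Real.volume_Icc]
  refine measure_mono (iUnion₂_subset fun p hp => ?_)
  obtain ⟨h0, h1⟩ := β.blocks_sub p hp
  exact Ioo_subset_Icc_self.trans (Icc_subset_Icc h0 h1)

lemma IsCorrespondence.swap {β γ : IntervalPartition} {n : ℕ}
    {c : Fin n → (ℝ × ℝ) × (ℝ × ℝ)} (hc : IsCorrespondence β γ n c) :
    IsCorrespondence γ β n fun j => (c j).swap :=
  ⟨fun j => (hc.1 j).symm, fun j k h => (hc.2 j k h).symm⟩

lemma IsCorrespondence.injective_fst {β γ : IntervalPartition} {n : ℕ}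
    {c : Fin n → (ℝ × ℝ) × (ℝ × ℝ)} (hc : IsCorrespondence β γ n c) :
    Function.Injective fun j => (c j).1 := by
  have key : ∀ j k : Fin n, j < k → (c j).1 ≠ (c k).1 := fun j k hjk h => by
    have h1 := (hc.2 j k hjk).1
    have h2 := β.blocks_lt _ (hc.1 j).1
    rw [← h] at h1
    linarith
  intro j k h
  by_contra hne
  rcases lt_or_gt_of_ne hne with hlt | hlt
  · exact key j k hlt h
  · exact key k j hlt h.symm

lemma IsCorrespondence.injective_snd {β γ : IntervalPartition} {n : ℕ}
    {c : Fin n → (ℝ × ℝ) × (ℝ × ℝ)} (hc : IsCorrespondence β γ n c) :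
    Function.Injective fun j => (c j).2 :=
  hc.swap.injective_fst

/-- The blocks of the first partition that a correspondence leaves unmatched. -/
def unmatched (β : IntervalPartition) {n : ℕ} (c : Fin n → (ℝ × ℝ) × (ℝ × ℝ)) :
    Set (ℝ × ℝ) :=
  β.blocks \ range fun j => (c j).1

lemma tsum_unmatched_le {β γ : IntervalPartition} {n : ℕ}
    {c : Fin n → (ℝ × ℝ) × (ℝ × ℝ)} (hc : IsCorrespondence β γ n c) :
    ∑' p : β.unmatched c, ENNReal.ofReal (mass p)
      ≤ ENNReal.ofReal (β.length - ∑ j, mass (c j).1) := by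
  have hsub : range (fun j => (c j).1) ⊆ β.blocks := by
    rintro _ ⟨j, rfl⟩
    exact (hc.1 j).1
  have hpos : ∀ j, 0 ≤ mass (c j).1 := fun j => (sub_pos.2 (β.blocks_lt _ (hc.1 j).1)).le
  have h1 := ENNReal.summable.tsum_union_disjoint (f := fun p : ℝ × ℝ => ENNReal.ofReal (mass p))
    (s := β.unmatched c) (t := range fun j => (c j).1) disjoint_sdiff_left ENNReal.summable
  have h2 : β.unmatched c ∪ range (fun j => (c j).1) = β.blocks := sdiff_union_of_subset hsub
  rw [h2, tsum_range (fun p : ℝ × ℝ => ENNReal.ofReal (mass p)) hc.injective_fst,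
    tsum_fintype (L := .unconditional (Fin n)), ← ENNReal.ofReal_sum_of_nonneg fun j _ => hpos j] at h1
  rw [ENNReal.ofReal_sub _ (Finset.sum_nonneg fun j _ => hpos j)]
  refine ENNReal.le_sub_of_add_le_right ENNReal.ofReal_ne_top ?_
  exact h1 ▸ β.tsum_mass_le

/-! ### Counting blocks above a level -/

/-- A block of `β` of mass exceeding `r` is unmatched, or matched to a block of mass at most `r`,
or matched to a block of mass exceeding `r`; the last kind injects into the blocks of `γ`. -/
lemma card_blocks_le {β γ : IntervalPartition} {n : ℕ}
    {c : Fin n → (ℝ × ℝ) × (ℝ × ℝ)} (hc : IsCorrespondence β γ n c) (r : ℝ) :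
    {p : ℝ × ℝ | p ∈ β.blocks ∧ r < mass p}.encard
      ≤ {j | mass (c j).2 ≤ r ∧ r < mass (c j).1}.encard
        + {p : β.unmatched c | r < mass p}.encard
        + {p : ℝ × ℝ | p ∈ γ.blocks ∧ r < mass p}.encard := by
  have hsub : {p : ℝ × ℝ | p ∈ β.blocks ∧ r < mass p}
      ⊆ (fun j => (c j).1) '' {j | mass (c j).2 ≤ r ∧ r < mass (c j).1}
        ∪ Subtype.val '' {p : β.unmatched c | r < mass p}
        ∪ (fun j => (c j).1) '' {j | r < mass (c j).2} := by
    rintro p ⟨hp, hr⟩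
    by_cases hm : p ∈ range fun j => (c j).1
    · obtain ⟨j, rfl⟩ := hm
      rcases le_or_gt (mass (c j).2) r with h | h
      · exact Or.inl (Or.inl ⟨j, ⟨h, hr⟩, rfl⟩)
      · exact Or.inr ⟨j, h, rfl⟩
    · exact Or.inl (Or.inr ⟨⟨p, hp, hm⟩, hr, rfl⟩)
  have h3 : {j | r < mass (c j).2}.encard
      ≤ {p : ℝ × ℝ | p ∈ γ.blocks ∧ r < mass p}.encard := by
    rw [← hc.injective_snd.encard_image]
    refine encard_le_encard ?_
    rintro _ ⟨j, hj, rfl⟩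
    exact ⟨(hc.1 j).2, hj⟩
  refine (encard_le_encard hsub).trans ((encard_union_le _ _).trans ?_)
  refine add_le_add ((encard_union_le _ _).trans ?_) ?_
  · exact add_le_add (encard_image_le _ _) (encard_image_le _ _)
  · exact (encard_image_le _ _).trans h3

/-- The sets `{k | r < s k}` are initial segments, so the number of indices with `t k ≤ r < s k`
is the excess of the block count of `β` over that of `γ`. -/
lemma card_ranked_le {β γ : IntervalPartition} {n : ℕ}
    {c : Fin n → (ℝ × ℝ) × (ℝ × ℝ)} (hc : IsCorrespondence β γ n c)
    {s t : ℕ → ℝ} (hs : IsRankedMassSeq β s) (ht : IsRankedMassSeq γ t) {r : ℝ} (hr : 0 < r) :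
    {k | t k ≤ r ∧ r < s k}.encard
      ≤ {j | mass (c j).2 ≤ r ∧ r < mass (c j).1}.encard
        + {p : β.unmatched c | r < mass p}.encard := by
  obtain ⟨hA, hP, hAP⟩ := hs.2.2 r hr
  obtain ⟨hB, hQ, hBQ⟩ := ht.2.2 r hr
  have hAe : {k | r < s k}.encard = {p : ℝ × ℝ | p ∈ β.blocks ∧ r < mass p}.encard := by
    rw [← hA.cast_ncard_eq, ← hP.cast_ncard_eq, hAP]
  have hBe : {k | r < t k}.encard = {p : ℝ × ℝ | p ∈ γ.blocks ∧ r < mass p}.encard := by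
    rw [← hB.cast_ncard_eq, ← hQ.cast_ncard_eq, hBQ]
  have hlA : IsLowerSet {k | r < s k} := fun _ _ h hk => lt_of_lt_of_le hk (hs.1 h)
  have hlB : IsLowerSet {k | r < t k} := fun _ _ h hk => lt_of_lt_of_le hk (ht.1 h)
  have hdiff : {k | t k ≤ r ∧ r < s k} = {k | r < s k} \ {k | r < t k} := by
    ext k
    simp [and_comm]
  rw [hdiff]
  rcases hlA.total hlB with h | h
  · simp [sdiff_eq_empty.2 h]
  · have hmain := card_blocks_le hc r
    rw [← hAe, ← hBe, ← encard_sdiff_add_encard_of_subset h] at hmain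
    exact (ENat.add_le_add_iff_right hB.encard_lt_top.ne).1 hmain

/-! ### The `ℓ¹` bound by the distortion -/

/-- One-sided comparison of the ranked sequences, obtained by integrating `card_ranked_le`
over the level `r`. -/
lemma tsum_ofReal_sub_le {β γ : IntervalPartition} {n : ℕ}
    {c : Fin n → (ℝ × ℝ) × (ℝ × ℝ)} (hc : IsCorrespondence β γ n c)
    {s t : ℕ → ℝ} (hs : IsRankedMassSeq β s) (ht : IsRankedMassSeq γ t) :
    ∑' k, ENNReal.ofReal (s k - t k)
      ≤ ENNReal.ofReal ((∑ j, |mass (c j).1 - mass (c j).2|)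
        + β.length - ∑ j, mass (c j).1) := by
  have : Countable (β.unmatched c) := (β.blocks_countable.mono sdiff_subset).to_subtype
  calc ∑' k, ENNReal.ofReal (s k - t k)
      = ∫⁻ r, ∑' k, (Ico (t k) (s k)).indicator (1 : ℝ → ℝ≥0∞) r :=
        (lintegral_tsum_indicator_Ico _ _).symm
    _ ≤ ∫⁻ r, ((∑' j, (Ico (mass (c j).2) (mass (c j).1)).indicator (1 : ℝ → ℝ≥0∞) r)
          + ∑' p : β.unmatched c, (Ico 0 (mass p)).indicator (1 : ℝ → ℝ≥0∞) r) := by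
        -- The counts are compared only at levels `r > 0`; the level `r = 0` is a null set.
        refine lintegral_mono_ae ?_
        filter_upwards [Measure.ae_ne volume (0 : ℝ)] with r hr0
        simp only [tsum_indicator_Ico]
        rcases lt_or_gt_of_ne hr0 with hr | hr
        · have : {k | t k ≤ r ∧ r < s k} = ∅ := by
            ext k
            simp only [mem_ofPred_eq, mem_empty_iff_false, iff_false, not_and]
            intro h
            linarith [ht.2.1 k]
          simp [this]
        · have h := card_ranked_le hc hs ht hr
          have hE : {p : β.unmatched c | 0 ≤ r ∧ r < mass p}
              = {p : β.unmatched c | r < mass p} := by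
            ext p
            simp [hr.le]
          rw [hE]
          exact_mod_cast h
    _ = (∑' j, ENNReal.ofReal (mass (c j).1 - mass (c j).2))
          + ∑' p : β.unmatched c, ENNReal.ofReal (mass p) := by
        rw [lintegral_add_left (Measurable.tsum fun j => measurable_indicator_Ico _ _),
          lintegral_tsum_indicator_Ico, lintegral_tsum_indicator_Ico]
        simp
    _ ≤ ENNReal.ofReal (∑ j, |mass (c j).1 - mass (c j).2|)
          + ENNReal.ofReal (β.length - ∑ j, mass (c j).1) := by
        refine add_le_add ?_ (tsum_unmatched_le hc)
        rw [tsum_fintype, ENNReal.ofReal_sum_of_nonneg fun j _ => abs_nonneg _]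
        exact Finset.sum_le_sum fun j _ => ENNReal.ofReal_le_ofReal (le_abs_self _)
    _ = _ := by
        have hL : 0 ≤ β.length - ∑ j, mass (c j).1 := by
          have hfin := β.tsum_mass_le
          have hsum : ENNReal.ofReal (∑ j, mass (c j).1) ≤ ENNReal.ofReal β.length := by
            rw [ENNReal.ofReal_sum_of_nonneg
              (f := fun j => mass (c j).1)
              fun j _ => (sub_pos.2 (β.blocks_lt _ (hc.1 j).1)).le,
              ← tsum_fintype (L := .unconditional (Fin n))]
            refine le_trans ?_ hfin
            exact ENNReal.tsum_comp_le_tsum_of_injective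
              (f := fun j => (⟨(c j).1, (hc.1 j).1⟩ : β.blocks))
              (fun j k h => hc.injective_fst (congrArg Subtype.val h))
              (fun p => ENNReal.ofReal (mass p))
          linarith [(ENNReal.ofReal_le_ofReal_iff β.length_nonneg).1 hsum]
        rw [← ENNReal.ofReal_add (Finset.sum_nonneg fun j _ => abs_nonneg _) hL, add_sub_assoc]

/-- The ranked sequences are within twice the distortion of any correspondence in `ℓ¹`.
The bound is obtained in `ℝ≥0∞`, so summability of the left-hand side is not needed. -/
lemma tsum_abs_sub_le {β γ : IntervalPartition} {n : ℕ}
    {c : Fin n → (ℝ × ℝ) × (ℝ × ℝ)} (hc : IsCorrespondence β γ n c)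
    {s t : ℕ → ℝ} (hs : IsRankedMassSeq β s) (ht : IsRankedMassSeq γ t) {ε : ℝ} (hε : 0 ≤ ε)
    (hle : hausDistortion β γ n c ≤ ε) :
    ∑' k, |s k - t k| ≤ ε + ε := by
  have h1 := (tsum_ofReal_sub_le hc hs ht).trans
    (ENNReal.ofReal_le_ofReal ((le_max_left _ _).trans hle))
  have h2 : ∑' k, ENNReal.ofReal (t k - s k) ≤ ENNReal.ofReal ε := by
    refine (tsum_ofReal_sub_le hc.swap ht hs).trans (ENNReal.ofReal_le_ofReal ?_)
    refine le_trans (le_of_eq ?_) ((le_max_right _ _).trans hle)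
    simp only [Prod.fst_swap, Prod.snd_swap, abs_sub_comm]
  have h3 : ∑' k, ENNReal.ofReal |s k - t k| ≤ ENNReal.ofReal (ε + ε) := by
    rw [ENNReal.ofReal_add hε hε]
    refine le_trans ?_ (add_le_add h1 h2)
    rw [← ENNReal.tsum_add]
    refine ENNReal.tsum_le_tsum fun k => ?_
    rcases abs_cases (s k - t k) with ⟨h, _⟩ | ⟨h, _⟩
    · rw [h]
      exact le_self_add
    · rw [h, neg_sub]
      exact le_add_self
  have h4 := ENNReal.toReal_mono ENNReal.ofReal_ne_top h3
  rw [ENNReal.tsum_toReal_eq fun _ => ENNReal.ofReal_ne_top,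
    ENNReal.toReal_ofReal (by linarith)] at h4
  simpa only [ENNReal.toReal_ofReal (abs_nonneg _)] using h4

end IntervalPartition

open IntervalPartition in
/-- the map `ranked : I_α → S↓` sending `β` to the decreasing
rearrangement of its block masses is continuous from `(I_α, d_α)` to `(S↓, ℓ¹)`:
if `x n → β` in `d_α` within `I_α` then the ranked sequences converge in `ℓ¹`. -/
theorem ranked_continuous (a : ℝ) (ha : 0 < a) (ha' : a < 1)
    (β : IntervalPartition) (hβ : HasDiversityProp a β)
    (x : ℕ → IntervalPartition) (hx : ∀ n, HasDiversityProp a (x n))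
    (hconv : Tendsto (fun n => dA a (x n) β) atTop (𝓝 0))
    (s : ℕ → ℕ → ℝ) (hs : ∀ n, IsRankedMassSeq (x n) (s n))
    (t : ℕ → ℝ) (ht : IsRankedMassSeq β t) :
    Tendsto (fun n => ∑' k, |s n k - t k|) atTop (𝓝 0) := by
  rw [Metric.tendsto_atTop] at hconv ⊢
  intro ε hε
  obtain ⟨N, hN⟩ := hconv (ε / 3) (by positivity)
  refine ⟨N, fun n hn => ?_⟩
  have hlt : dA a (x n) β < ε / 3 := by
    have := hN n hn
    rw [Real.dist_0_eq_abs] at this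
    exact (le_abs_self _).trans_lt this
  -- The empty correspondence makes the set of distortions nonempty.
  obtain ⟨_, ⟨m, c, hc, rfl⟩, hd⟩ := exists_lt_of_csInf_lt
    (by exact ⟨_, 0, Fin.elim0, ⟨fun j => j.elim0, fun j => j.elim0⟩, rfl⟩) hlt
  have hle := tsum_abs_sub_le hc (hs n) ht (by positivity) ((le_max_left _ _).trans hd.le)
  rw [Real.dist_0_eq_abs, abs_of_nonneg (tsum_nonneg fun _ => abs_nonneg _)]
  linarith
end

section
/- For all β,γ∈I_α and all c>0: (1) d_H'(β, cβ) = |c−1|·‖β‖; (2) d_H'(cβ, cγ) = c·d_H'(β,γ); (3) d_α(β, cβ) ≤ max{ |c^α − 1|·𝒟_β(∞), |c−1|·‖β‖ }; and (4) min{c, c^α}·d_α(β,γ) ≤ d_α(cβ, cγ) ≤ max{c, c^α}·d_α(β,γ). -/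
/-!
Write `cβ` for the scaled partition. Pairing each block `U` with its image `cU` turns any
correspondence between `β` and `γ` into one between `cβ` and `cγ`. Masses and lengths are multiplied
by `c`, and diversities by `c ^ a` (`HasDiversity.scale`: substitute `h / c` for `h` in the limit).
Thus the Hausdorff distortion is multiplied by `c` and the `a`-distortion by at most
`max c (c ^ a)`; taking infima gives one inequality for each metric, and the opposite one follows by
applying it to `cβ`, `cγ` and the factor `c⁻¹`.

For the distance between `β` and `cβ`, two facts about masses are needed: finitely many blocks have
total mass at most `‖β‖` (`sum_mass_le`), and finite ordered families of blocks have total mass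
arbitrarily close to `‖β‖` (`exists_seq`). The lower bound `|c - 1| ‖β‖` comes from the first fact
and `|x - y| ≥ ±(x - y)`; the upper bounds come from pairing `U_j` with `cU_j` along a family that
exhausts the mass up to `ε`, where `|𝒟_β(U) - c ^ a 𝒟_β(U)| ≤ |c ^ a - 1| 𝒟_β(∞)` because the
diversity is nonnegative and nondecreasing.
-/

open MeasureTheory Filter Topology Set

/-- `γ` is the scaled partition `cβ = {(ca, cb) : (a,b) ∈ β}`. -/
def IsScaled (c : ℝ) (β γ : IntervalPartition) : Prop :=
  γ.length = c * β.length ∧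
  γ.blocks = (fun p : ℝ × ℝ => (c * p.1, c * p.2)) '' β.blocks

namespace IntervalPartition

/-! ### Masses of finite families of blocks -/

/-- Two distinct blocks are ordered by their left endpoints. -/
lemma le_of_fst_le (β : IntervalPartition) {p q : ℝ × ℝ} (hp : p ∈ β.blocks) (hq : q ∈ β.blocks)
    (hne : p ≠ q) (h : p.1 ≤ q.1) : p.2 ≤ q.1 := by
  by_contra! hlt
  obtain ⟨x, hx1, hx2⟩ := exists_between (lt_min hlt (β.blocks_lt q hq))
  have hx : x ∈ Ioo p.1 p.2 ∩ Ioo q.1 q.2 :=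
    ⟨⟨h.trans_lt hx1, hx2.trans_le (min_le_left _ _)⟩, hx1, hx2.trans_le (min_le_right _ _)⟩
  rw [β.blocks_disjoint p hp q hq hne] at hx
  exact hx

lemma mass_pos (β : IntervalPartition) {p : ℝ × ℝ} (hp : p ∈ β.blocks) : 0 < mass p :=
  sub_pos.2 (β.blocks_lt p hp)

lemma pairwiseDisjoint (β : IntervalPartition) :
    β.blocks.PairwiseDisjoint (fun p : ℝ × ℝ => Ioo p.1 p.2) := fun p hp q hq hne =>
  Set.disjoint_iff_inter_eq_empty.2 (β.blocks_disjoint p hp q hq hne)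

lemma sum_mass_le (β : IntervalPartition) (s : Finset (ℝ × ℝ)) (hs : ↑s ⊆ β.blocks) :
    ∑ p ∈ s, mass p ≤ β.length := by
  have h1 : volume (⋃ p ∈ s, Ioo p.1 p.2) = ∑ p ∈ s, ENNReal.ofReal (mass p) := by
    rw [measure_biUnion_finset (β.pairwiseDisjoint.subset hs) (fun _ _ => measurableSet_Ioo)]
    simp [Real.volume_Ioo, mass]
  have h2 : volume (⋃ p ∈ s, Ioo p.1 p.2) ≤ volume (Icc 0 β.length) := by
    refine measure_mono (iUnion₂_subset fun p hp x hx => ?_)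
    have := β.blocks_sub p (hs hp)
    exact ⟨this.1.trans hx.1.le, hx.2.le.trans this.2⟩
  rw [h1, Real.volume_Icc, sub_zero,
    ← ENNReal.ofReal_sum_of_nonneg fun p hp => (β.mass_pos (hs hp)).le] at h2
  exact (ENNReal.ofReal_le_ofReal_iff β.length_nonneg).1 h2

lemma exists_finset (β : IntervalPartition) {ε : ℝ} (hε : 0 < ε) :
    ∃ s : Finset (ℝ × ℝ), ↑s ⊆ β.blocks ∧ β.length - ε < ∑ p ∈ s, mass p := by
  rcases lt_or_ge (β.length - ε) 0 with h0 | h0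
  · exact ⟨∅, by simp, by simpa using h0⟩
  have hcount : β.blocks.Countable :=
    β.pairwiseDisjoint.countable_of_isOpen (fun _ _ => isOpen_Ioo)
      fun p hp => nonempty_Ioo.2 (β.blocks_lt p hp)
  have hle : ENNReal.ofReal β.length ≤ ∑' p : β.blocks, ENNReal.ofReal (mass p) := by
    have hU : volume (⋃ p ∈ β.blocks, Ioo p.1 p.2)
        ≤ ∑' p : β.blocks, ENNReal.ofReal (mass p) := by
      refine (measure_biUnion_le volume hcount _).trans (le_of_eq ?_)
      simp [Real.volume_Ioo, mass]
    calc ENNReal.ofReal β.length = volume (Icc 0 β.length) := by simp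
      _ ≤ volume (Icc 0 β.length \ ⋃ p ∈ β.blocks, Ioo p.1 p.2)
          + volume (⋃ p ∈ β.blocks, Ioo p.1 p.2) := by
        refine (measure_mono ?_).trans (measure_union_le _ _)
        intro x hx
        by_cases h : x ∈ ⋃ p ∈ β.blocks, Ioo p.1 p.2
        · exact Or.inr h
        · exact Or.inl ⟨hx, h⟩
      _ ≤ _ := by rw [β.compl_null, zero_add]; exact hU
  have hlt : ENNReal.ofReal (β.length - ε) < ∑' p : β.blocks, ENNReal.ofReal (mass p) :=
    ((ENNReal.ofReal_lt_ofReal_iff (by linarith)).2 (by linarith)).trans_le hle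
  rw [ENNReal.tsum_eq_iSup_sum, lt_iSup_iff] at hlt
  obtain ⟨s, hs⟩ := hlt
  refine ⟨s.map (Function.Embedding.subtype _), ?_, ?_⟩
  · intro p hp
    obtain ⟨q, -, rfl⟩ := Finset.mem_map.1 hp
    exact q.2
  · rw [Finset.sum_map]
    rw [← ENNReal.ofReal_sum_of_nonneg fun p _ => (β.mass_pos p.2).le] at hs
    exact ENNReal.ofReal_lt_ofReal_iff'.1 hs |>.1

lemma exists_seq (β : IntervalPartition) {ε : ℝ} (hε : 0 < ε) :
    ∃ n, ∃ u : Fin n → ℝ × ℝ, (∀ j, u j ∈ β.blocks) ∧ (∀ j k, j < k → (u j).2 ≤ (u k).1) ∧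
      β.length - ε < ∑ j, mass (u j) := by
  obtain ⟨s, hs, hsum⟩ := β.exists_finset hε
  -- the lexicographic order of the endpoint pairs refines the left-to-right order of blocks
  let t : Finset (ℝ ×ₗ ℝ) := s.map toLex.toEmbedding
  let e := t.orderIsoOfFin rfl
  have hmem : ∀ j, ofLex (e j : ℝ ×ₗ ℝ) ∈ β.blocks := by
    intro j
    obtain ⟨q, hq, h⟩ := Finset.mem_map.1 (e j).2
    rw [← h]
    exact hs hq
  refine ⟨_, fun j => ofLex (e j : ℝ ×ₗ ℝ), hmem, ?_, ?_⟩
  · intro j k hjk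
    have hlt : (e j : ℝ ×ₗ ℝ) < e k := e.strictMono hjk
    refine β.le_of_fst_le (hmem j) (hmem k) (fun h => hlt.ne (ofLex.injective h)) ?_
    rcases Prod.Lex.lt_iff.1 hlt with h | h
    · exact h.le
    · exact h.1.le
  · have : ∑ j, mass (ofLex (e j : ℝ ×ₗ ℝ)) = ∑ p ∈ s, mass p := by
      rw [show ∑ j, mass (ofLex (e j : ℝ ×ₗ ℝ)) = ∑ x : t, mass (ofLex (x : ℝ ×ₗ ℝ)) from
          e.toEquiv.sum_comp (fun x : t => mass (ofLex (x : ℝ ×ₗ ℝ))),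
        Finset.sum_coe_sort t (fun x => mass (ofLex x)), Finset.sum_map]
      rfl
    rw [this]
    exact hsum

lemma sum_seq_le (β : IntervalPartition) {n : ℕ} (u : Fin n → ℝ × ℝ) (hu : ∀ j, u j ∈ β.blocks)
    (hlt : ∀ j k, j < k → (u j).2 ≤ (u k).1) : ∑ j, mass (u j) ≤ β.length := by
  have hinj : Function.Injective u := by
    have key : ∀ j k, j < k → u j ≠ u k := fun j k hjk h =>
      absurd (hlt j k hjk) (by rw [h]; exact not_le.2 (β.blocks_lt _ (hu k)))
    intro j k h
    rcases lt_trichotomy j k with hjk | hjk | hjk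
    · exact absurd h (key _ _ hjk)
    · exact hjk
    · exact absurd h.symm (key _ _ hjk)
  rw [show ∑ j, mass (u j) = ∑ p ∈ Finset.univ.map ⟨u, hinj⟩, mass p from
    (Finset.sum_map Finset.univ ⟨u, hinj⟩ mass).symm]
  refine β.sum_mass_le _ fun p hp => ?_
  obtain ⟨j, -, rfl⟩ := Finset.mem_map.1 hp
  exact hu j

/-- Only finitely many blocks have mass exceeding a given `h > 0`. In particular the cardinal in
`divCount` is that of a finite set, so no junk value of `Set.ncard` occurs. -/
lemma finite_large (β : IntervalPartition) {h : ℝ} (hh : 0 < h) (t : ℝ) :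
    {p : ℝ × ℝ | p ∈ β.blocks ∧ h < p.2 - p.1 ∧ p.2 ≤ t}.Finite := by
  by_contra hinf
  obtain ⟨n, hn⟩ := exists_nat_gt (β.length / h)
  obtain ⟨s, hs, hcard⟩ := Set.Infinite.exists_subset_card_eq hinf n
  have h1 := β.sum_mass_le s fun p hp => (hs hp).1
  have h2 : s.card • h ≤ ∑ p ∈ s, mass p :=
    Finset.card_nsmul_le_sum s mass h fun p hp => (hs hp).2.1.le
  rw [hcard, nsmul_eq_mul] at h2
  rw [div_lt_iff₀ hh] at hn
  linarith

/-! ### Diversity -/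

lemma HasDiversity.diversity_eq {a : ℝ} {β : IntervalPartition} {t d : ℝ}
    (h : HasDiversity a β t d) : diversity a β t = d :=
  Tendsto.limUnder_eq h

lemma HasDiversity.nonneg {a : ℝ} (ha : a < 1) {β : IntervalPartition} {t d : ℝ}
    (h : HasDiversity a β t d) : 0 ≤ d := by
  refine ge_of_tendsto h ?_
  filter_upwards [self_mem_nhdsWithin] with x hx
  have := Real.Gamma_pos_of_pos (sub_pos.2 ha)
  have := Real.rpow_nonneg (le_of_lt (mem_Ioi.1 hx)) a
  positivity

lemma HasDiversity.mono {a : ℝ} (ha : a < 1) {β : IntervalPartition} {t t' d d' : ℝ}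
    (h : HasDiversity a β t d) (h' : HasDiversity a β t' d') (htt : t ≤ t') : d ≤ d' := by
  refine le_of_tendsto_of_tendsto h h' ?_
  filter_upwards [self_mem_nhdsWithin] with x hx
  have := Real.Gamma_pos_of_pos (sub_pos.2 ha)
  have := Real.rpow_nonneg (le_of_lt (mem_Ioi.1 hx)) a
  have hN : divCount β t x ≤ divCount β t' x :=
    Set.ncard_le_ncard (fun p hp => ⟨hp.1, hp.2.1, hp.2.2.trans htt⟩) (β.finite_large hx t')
  gcongr

lemma mid_mem (β : IntervalPartition) {p : ℝ × ℝ} (hp : p ∈ β.blocks) :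
    (p.1 + p.2) / 2 ∈ Icc 0 β.length := by
  have h1 := β.blocks_lt p hp
  have h2 := β.blocks_sub p hp
  constructor <;> linarith [h2.1, h2.2]

/-! ### Scaling -/

/-- The image `(cx, cy)` of the block `(x, y)` under multiplication by `c`. -/
def sc (c : ℝ) (p : ℝ × ℝ) : ℝ × ℝ := (c * p.1, c * p.2)

lemma mass_sc (c : ℝ) (p : ℝ × ℝ) : mass (sc c p) = c * mass p := by
  simp only [mass, sc]; ring

lemma sc_inv {c : ℝ} (hc : 0 < c) (p : ℝ × ℝ) : sc c⁻¹ (sc c p) = p := by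
  simp [sc, inv_mul_cancel_left₀ hc.ne']

lemma sc_injective {c : ℝ} (hc : 0 < c) : Function.Injective (sc c) :=
  Function.LeftInverse.injective (sc_inv hc)

lemma sc_mem {c : ℝ} {β β' : IntervalPartition} (h : IsScaled c β β') {p : ℝ × ℝ}
    (hp : p ∈ β.blocks) : sc c p ∈ β'.blocks := by
  rw [h.2]; exact ⟨p, hp, rfl⟩

lemma isScaled_inv {c : ℝ} (hc : 0 < c) {β β' : IntervalPartition} (h : IsScaled c β β') :
    IsScaled c⁻¹ β' β := by
  refine ⟨by rw [h.1, inv_mul_cancel_left₀ hc.ne'], ?_⟩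
  rw [h.2, Set.image_image]
  have : (fun p : ℝ × ℝ => (c⁻¹ * (c * p.1), c⁻¹ * (c * p.2))) = id := funext (sc_inv hc)
  rw [this, image_id]

lemma divCount_scale {c : ℝ} (hc : 0 < c) {β β' : IntervalPartition} (h : IsScaled c β β')
    (t x : ℝ) : divCount β' (c * t) x = divCount β t (x / c) := by
  unfold divCount
  rw [← Set.ncard_image_of_injective
    {p : ℝ × ℝ | p ∈ β.blocks ∧ x / c < p.2 - p.1 ∧ p.2 ≤ t} (sc_injective hc)]
  congr 1
  ext p
  simp only [mem_ofPred_eq, h.2, mem_image]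
  constructor
  · rintro ⟨⟨q, hq, rfl⟩, h1, h2⟩
    refine ⟨q, ⟨hq, ?_, le_of_mul_le_mul_left h2 hc⟩, rfl⟩
    rw [div_lt_iff₀ hc]
    dsimp only at h1
    linarith
  · rintro ⟨q, ⟨hq, h1, h2⟩, rfl⟩
    refine ⟨⟨q, hq, rfl⟩, ?_, mul_le_mul_of_nonneg_left h2 hc.le⟩
    rw [div_lt_iff₀ hc] at h1
    simp only [sc]
    linarith

lemma HasDiversity.scale {a c : ℝ} (hc : 0 < c) {β β' : IntervalPartition} (h : IsScaled c β β')
    {t d : ℝ} (hd : HasDiversity a β t d) : HasDiversity a β' (c * t) (c ^ a * d) := by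
  have hdiv : Tendsto (fun x : ℝ => x / c) (𝓝[>] 0) (𝓝[>] 0) := by
    refine tendsto_nhdsWithin_iff.2 ⟨?_, ?_⟩
    · have : Tendsto (fun x : ℝ => x / c) (𝓝 0) (𝓝 (0 / c)) :=
        (continuous_id.div_const c).tendsto 0
      rw [zero_div] at this
      exact this.mono_left nhdsWithin_le_nhds
    · filter_upwards [self_mem_nhdsWithin] with x hx using div_pos hx hc
  have hlim := (Tendsto.comp hd hdiv).const_mul (c ^ a)
  refine hlim.congr' ?_
  filter_upwards [self_mem_nhdsWithin] with x hx
  have hca : c ^ a ≠ 0 := (Real.rpow_pos_of_pos hc a).ne'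
  simp only [Function.comp_apply]
  rw [divCount_scale hc h, Real.div_rpow (le_of_lt (mem_Ioi.1 hx)) hc.le]
  field_simp

lemma hasDiversityProp_scale {a c : ℝ} (hc : 0 < c) {β β' : IntervalPartition}
    (h : IsScaled c β β') (hβ : HasDiversityProp a β) : HasDiversityProp a β' := by
  intro t ht
  have hmem : c⁻¹ * t ∈ Icc 0 β.length := by
    refine ⟨mul_nonneg (inv_pos.2 hc).le ht.1, ?_⟩
    rw [(isScaled_inv hc h).1]
    exact mul_le_mul_of_nonneg_left ht.2 (inv_pos.2 hc).le
  obtain ⟨d, hd⟩ := hβ _ hmem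
  have := hd.scale hc h
  rw [mul_inv_cancel_left₀ hc.ne'] at this
  exact ⟨_, this⟩

lemma totalDiversity_scale {a c : ℝ} (hc : 0 < c) {β β' : IntervalPartition}
    (h : IsScaled c β β') (hβ : HasDiversityProp a β) :
    totalDiversity a β' = c ^ a * totalDiversity a β := by
  obtain ⟨d, hd⟩ := hβ _ (right_mem_Icc.2 β.length_nonneg)
  unfold totalDiversity
  rw [h.1, (hd.scale hc h).diversity_eq, hd.diversity_eq]

lemma blockDiversity_scale {a c : ℝ} (hc : 0 < c) {β β' : IntervalPartition}
    (h : IsScaled c β β') (hβ : HasDiversityProp a β) {p : ℝ × ℝ} (hp : p ∈ β.blocks) :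
    blockDiversity a β' (sc c p) = c ^ a * blockDiversity a β p := by
  obtain ⟨d, hd⟩ := hβ _ (β.mid_mem hp)
  have hmid : ((sc c p).1 + (sc c p).2) / 2 = c * ((p.1 + p.2) / 2) := by
    simp only [sc]; ring
  unfold blockDiversity
  rw [hmid, (hd.scale hc h).diversity_eq, hd.diversity_eq]

/-- Block diversities are nonnegative and at most the total diversity. -/
lemma blockDiversity_bounds {a : ℝ} (ha : a < 1) {β : IntervalPartition}
    (hβ : HasDiversityProp a β) {p : ℝ × ℝ} (hp : p ∈ β.blocks) :
    0 ≤ blockDiversity a β p ∧ blockDiversity a β p ≤ totalDiversity a β := by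
  obtain ⟨d, hd⟩ := hβ _ (β.mid_mem hp)
  obtain ⟨D, hD⟩ := hβ _ (right_mem_Icc.2 β.length_nonneg)
  unfold blockDiversity totalDiversity
  rw [hd.diversity_eq, hD.diversity_eq]
  exact ⟨hd.nonneg ha, hd.mono ha hD (β.mid_mem hp).2⟩

lemma totalDiversity_nonneg {a : ℝ} (ha : a < 1) {β : IntervalPartition}
    (hβ : HasDiversityProp a β) : 0 ≤ totalDiversity a β := by
  obtain ⟨D, hD⟩ := hβ _ (right_mem_Icc.2 β.length_nonneg)
  unfold totalDiversity
  rw [hD.diversity_eq]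
  exact hD.nonneg ha

/-! ### Distortions and the metrics -/

lemma IsCorrespondence.sum_left_le {β γ : IntervalPartition} {n : ℕ}
    {C : Fin n → (ℝ × ℝ) × (ℝ × ℝ)} (h : IsCorrespondence β γ n C) :
    ∑ j, mass (C j).1 ≤ β.length :=
  β.sum_seq_le (fun j => (C j).1) (fun j => (h.1 j).1) fun j k hjk => (h.2 j k hjk).1

lemma IsCorrespondence.sum_right_le {β γ : IntervalPartition} {n : ℕ}
    {C : Fin n → (ℝ × ℝ) × (ℝ × ℝ)} (h : IsCorrespondence β γ n C) :
    ∑ j, mass (C j).2 ≤ γ.length :=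
  γ.sum_seq_le (fun j => (C j).2) (fun j => (h.1 j).2) fun j k hjk => (h.2 j k hjk).2

/-- The difference of the total lengths bounds the Hausdorff distortion from below. -/
lemma IsCorrespondence.abs_length_sub_le {β γ : IntervalPartition} {n : ℕ}
    {C : Fin n → (ℝ × ℝ) × (ℝ × ℝ)} (h : IsCorrespondence β γ n C) :
    |γ.length - β.length| ≤ hausDistortion β γ n C := by
  have h1 := h.sum_left_le
  have h2 := h.sum_right_le
  have h3 : |∑ j, mass (C j).1 - ∑ j, mass (C j).2| ≤ ∑ j, |mass (C j).1 - mass (C j).2| := by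
    rw [← Finset.sum_sub_distrib]
    exact Finset.abs_sum_le_sum_abs _ _
  obtain ⟨h4, h5⟩ := abs_le.1 h3
  unfold hausDistortion
  refine abs_le'.2 ⟨le_max_of_le_right ?_, le_max_of_le_left ?_⟩ <;> linarith

lemma IsCorrespondence.hausDistortion_nonneg {β γ : IntervalPartition} {n : ℕ}
    {C : Fin n → (ℝ × ℝ) × (ℝ × ℝ)} (h : IsCorrespondence β γ n C) :
    0 ≤ hausDistortion β γ n C :=
  (abs_nonneg _).trans h.abs_length_sub_le

lemma isCorrespondence_empty (β γ : IntervalPartition) (C : Fin 0 → (ℝ × ℝ) × (ℝ × ℝ)) :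
    IsCorrespondence β γ 0 C :=
  ⟨fun j => j.elim0, fun j => j.elim0⟩

lemma alphaDistortion_nonneg (a : ℝ) (β γ : IntervalPartition) (n : ℕ)
    (C : Fin n → (ℝ × ℝ) × (ℝ × ℝ)) : 0 ≤ alphaDistortion a β γ n C :=
  le_max_of_le_right (le_max_of_le_right (abs_nonneg _))

lemma dHp_le {β γ : IntervalPartition} {n : ℕ} {C : Fin n → (ℝ × ℝ) × (ℝ × ℝ)}
    (h : IsCorrespondence β γ n C) : dHp β γ ≤ hausDistortion β γ n C := by
  refine csInf_le ⟨0, ?_⟩ ⟨n, C, h, rfl⟩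
  rintro x ⟨m, E, hE, rfl⟩
  exact hE.hausDistortion_nonneg

lemma le_dHp {β γ : IntervalPartition} {r : ℝ}
    (h : ∀ n C, IsCorrespondence β γ n C → r ≤ hausDistortion β γ n C) : r ≤ dHp β γ := by
  refine le_csInf ⟨_, 0, Fin.elim0, isCorrespondence_empty _ _ _, rfl⟩ ?_
  rintro x ⟨m, E, hE, rfl⟩
  exact h m E hE

lemma dA_le {a : ℝ} {β γ : IntervalPartition} {n : ℕ} {C : Fin n → (ℝ × ℝ) × (ℝ × ℝ)}
    (h : IsCorrespondence β γ n C) : dA a β γ ≤ alphaDistortion a β γ n C := by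
  refine csInf_le ⟨0, ?_⟩ ⟨n, C, h, rfl⟩
  rintro x ⟨m, E, hE, rfl⟩
  exact alphaDistortion_nonneg _ _ _ _ _

lemma le_dA {a : ℝ} {β γ : IntervalPartition} {r : ℝ}
    (h : ∀ n C, IsCorrespondence β γ n C → r ≤ alphaDistortion a β γ n C) : r ≤ dA a β γ := by
  refine le_csInf ⟨_, 0, Fin.elim0, isCorrespondence_empty _ _ _, rfl⟩ ?_
  rintro x ⟨m, E, hE, rfl⟩
  exact h m E hE

/-- The correspondence obtained by multiplying all blocks by `c`. -/
def scC (c : ℝ) {n : ℕ} (C : Fin n → (ℝ × ℝ) × (ℝ × ℝ)) : Fin n → (ℝ × ℝ) × (ℝ × ℝ) :=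
  fun j => (sc c (C j).1, sc c (C j).2)

lemma IsCorrespondence.scale {c : ℝ} (hc : 0 < c) {β γ β' γ' : IntervalPartition}
    (hβ : IsScaled c β β') (hγ : IsScaled c γ γ') {n : ℕ} {C : Fin n → (ℝ × ℝ) × (ℝ × ℝ)}
    (h : IsCorrespondence β γ n C) : IsCorrespondence β' γ' n (scC c C) :=
  ⟨fun j => ⟨sc_mem hβ (h.1 j).1, sc_mem hγ (h.1 j).2⟩, fun j k hjk =>
    ⟨mul_le_mul_of_nonneg_left (h.2 j k hjk).1 hc.le,
      mul_le_mul_of_nonneg_left (h.2 j k hjk).2 hc.le⟩⟩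

lemma hausDistortion_scale {c : ℝ} (hc : 0 < c) {β γ β' γ' : IntervalPartition}
    (hβ : IsScaled c β β') (hγ : IsScaled c γ γ') {n : ℕ} (C : Fin n → (ℝ × ℝ) × (ℝ × ℝ)) :
    hausDistortion β' γ' n (scC c C) = c * hausDistortion β γ n C := by
  unfold hausDistortion
  simp only [scC, mass_sc, hβ.1, hγ.1, ← mul_sub, abs_mul, abs_of_pos hc, ← Finset.mul_sum]
  rw [mul_max_of_nonneg _ _ hc.le]
  congr 1 <;> ring

lemma alphaDistortion_scale {a c : ℝ} (hc : 0 < c) {β γ β' γ' : IntervalPartition}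
    (hβ : HasDiversityProp a β) (hγ : HasDiversityProp a γ)
    (hβ' : IsScaled c β β') (hγ' : IsScaled c γ γ') {n : ℕ} {C : Fin n → (ℝ × ℝ) × (ℝ × ℝ)}
    (h : IsCorrespondence β γ n C) :
    alphaDistortion a β' γ' n (scC c C) ≤ max c (c ^ a) * alphaDistortion a β γ n C := by
  have hca : 0 < c ^ a := Real.rpow_pos_of_pos hc a
  have hM : 0 ≤ max c (c ^ a) := le_max_of_le_left hc.le
  have h0 := alphaDistortion_nonneg a β γ n C
  have key : ∀ x y : ℝ, |x - y| ≤ alphaDistortion a β γ n C →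
      |c ^ a * x - c ^ a * y| ≤ max c (c ^ a) * alphaDistortion a β γ n C := by
    intro x y hxy
    rw [← mul_sub, abs_mul, abs_of_pos hca]
    exact mul_le_mul (le_max_right _ _) hxy (abs_nonneg _) hM
  rw [alphaDistortion]
  refine max_le ?_ (max_le (Real.iSup_le (fun j => ?_) (mul_nonneg hM h0)) ?_)
  · rw [hausDistortion_scale hc hβ' hγ']
    exact mul_le_mul (le_max_left _ _) (le_max_left _ _) h.hausDistortion_nonneg hM
  · simp only [scC]
    rw [blockDiversity_scale hc hβ' hβ (h.1 j).1, blockDiversity_scale hc hγ' hγ (h.1 j).2]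
    refine key _ _ (le_max_of_le_right (le_max_of_le_left ?_))
    exact le_ciSup (f := fun j => |blockDiversity a β (C j).1 - blockDiversity a γ (C j).2|)
      (Set.finite_range _).bddAbove j
  · rw [totalDiversity_scale hc hβ' hβ, totalDiversity_scale hc hγ' hγ]
    exact key _ _ (le_max_of_le_right (le_max_right _ _))

lemma dHp_scale_le {c : ℝ} (hc : 0 < c) {β γ β' γ' : IntervalPartition}
    (hβ : IsScaled c β β') (hγ : IsScaled c γ γ') : dHp β' γ' ≤ c * dHp β γ := by
  rw [← div_le_iff₀' hc]
  refine le_dHp fun n C hC => ?_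
  rw [div_le_iff₀' hc, ← hausDistortion_scale hc hβ hγ]
  exact dHp_le (hC.scale hc hβ hγ)

lemma dA_scale_le {a c : ℝ} (hc : 0 < c) {β γ β' γ' : IntervalPartition}
    (hβ : HasDiversityProp a β) (hγ : HasDiversityProp a γ)
    (hβ' : IsScaled c β β') (hγ' : IsScaled c γ γ') :
    dA a β' γ' ≤ max c (c ^ a) * dA a β γ := by
  have hM : 0 < max c (c ^ a) := lt_max_of_lt_left hc
  rw [← div_le_iff₀' hM]
  refine le_dA fun n C hC => ?_
  rw [div_le_iff₀' hM]
  exact (dA_le (hC.scale hc hβ' hγ')).trans (alphaDistortion_scale hc hβ hγ hβ' hγ' hC)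

/-- Pairing blocks `U` with `cU` along a family exhausting the mass of `β` gives correspondences
between `β` and `cβ` with Hausdorff distortion arbitrarily close to `|c - 1| ‖β‖`. -/
lemma exists_correspondence_self {c : ℝ} (hc : 0 < c) {β β' : IntervalPartition}
    (h : IsScaled c β β') {ε : ℝ} (hε : 0 < ε) :
    ∃ n, ∃ u : Fin n → ℝ × ℝ, IsCorrespondence β β' n (fun j => (u j, sc c (u j))) ∧
      hausDistortion β β' n (fun j => (u j, sc c (u j))) ≤ |c - 1| * β.length + ε := by
  -- both parts of the distortion exceed `|c - 1| ‖β‖` by at most `max 1 c` times the missing mass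
  have hδ : 0 < ε / (1 + c) := by positivity
  obtain ⟨n, u, hu, hlt, hsum⟩ := β.exists_seq hδ
  refine ⟨n, u, ⟨fun j => ⟨hu j, sc_mem h (hu j)⟩, fun j k hjk =>
    ⟨hlt j k hjk, mul_le_mul_of_nonneg_left (hlt j k hjk) hc.le⟩⟩, ?_⟩
  have hle := β.sum_seq_le u hu hlt
  have habs : ∀ j, |mass (u j) - c * mass (u j)| = |c - 1| * mass (u j) := by
    intro j
    have hm := β.mass_pos (hu j)
    rw [show mass (u j) - c * mass (u j) = -((c - 1) * mass (u j)) by ring, abs_neg, abs_mul,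
      abs_of_pos hm]
  unfold hausDistortion
  simp only [mass_sc, habs, h.1, ← Finset.mul_sum]
  set S := ∑ j, mass (u j)
  have h1 : |c - 1| * S ≤ |c - 1| * β.length := mul_le_mul_of_nonneg_left hle (abs_nonneg _)
  have h2 : (1 + c) * (β.length - S) ≤ ε := by
    rw [← le_div_iff₀' (by positivity)]
    linarith
  have h3 : 0 ≤ β.length - S := by linarith
  have h4 : 0 ≤ c * (β.length - S) := mul_nonneg hc.le h3
  refine max_le ?_ ?_ <;> linarith

lemma dHp_self_scale {c : ℝ} (hc : 0 < c) {β β' : IntervalPartition} (h : IsScaled c β β') :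
    dHp β β' = |c - 1| * β.length := by
  refine le_antisymm (le_of_forall_pos_le_add fun ε hε => ?_) (le_dHp fun n C hC => ?_)
  · obtain ⟨n, u, hC, hD⟩ := exists_correspondence_self hc h hε
    exact (dHp_le hC).trans hD
  · refine le_trans (le_of_eq ?_) hC.abs_length_sub_le
    rw [h.1, show c * β.length - β.length = (c - 1) * β.length by ring, abs_mul,
      abs_of_nonneg β.length_nonneg]

lemma dA_self_scale {a c : ℝ} (ha : a < 1) (hc : 0 < c) {β β' : IntervalPartition}
    (hβ : HasDiversityProp a β) (h : IsScaled c β β') :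
    dA a β β' ≤ max (|c ^ a - 1| * totalDiversity a β) (|c - 1| * β.length) := by
  have hD := totalDiversity_nonneg ha hβ
  have key : ∀ x : ℝ, 0 ≤ x → |x - c ^ a * x| = |c ^ a - 1| * x := by
    intro x hx
    rw [show x - c ^ a * x = -((c ^ a - 1) * x) by ring, abs_neg, abs_mul, abs_of_nonneg hx]
  refine le_of_forall_pos_le_add fun ε hε => ?_
  obtain ⟨n, u, hC, hH⟩ := exists_correspondence_self hc h hε
  refine (dA_le hC).trans ?_
  have hb : |c ^ a - 1| * totalDiversity a β ≤
      max (|c ^ a - 1| * totalDiversity a β) (|c - 1| * β.length) + ε :=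
    (le_max_left _ _).trans (by linarith)
  refine max_le (hH.trans (by gcongr; exact le_max_right _ _)) (max_le (Real.iSup_le (fun j => ?_)
    ((mul_nonneg (abs_nonneg _) hD).trans hb)) ?_)
  · obtain ⟨h0, h1⟩ := blockDiversity_bounds ha hβ (hC.1 j).1
    rw [blockDiversity_scale hc h hβ (hC.1 j).1, key _ h0]
    exact (mul_le_mul_of_nonneg_left h1 (abs_nonneg _)).trans hb
  · rw [totalDiversity_scale hc h hβ, key _ hD]
    exact hb

end IntervalPartition

open IntervalPartition in
/-- for `β, γ ∈ I_α` and `c > 0`: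
(1) `d_H'(β, cβ) = |c-1| ‖β‖`; (2) `d_H'(cβ, cγ) = c d_H'(β,γ)`;
(3) `d_α(β, cβ) ≤ max{|c^α - 1| 𝒟_β(∞), |c-1| ‖β‖}`;
(4) `min{c, c^α} d_α(β,γ) ≤ d_α(cβ, cγ) ≤ max{c, c^α} d_α(β,γ)`. -/
theorem scaling_distances (a : ℝ) (ha : 0 < a) (ha' : a < 1) (c : ℝ) (hc : 0 < c)
    (β γ β' γ' : IntervalPartition)
    (hβ : HasDiversityProp a β) (hγ : HasDiversityProp a γ)
    (hβ' : IsScaled c β β') (hγ' : IsScaled c γ γ') :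
    dHp β β' = |c - 1| * β.length ∧
    dHp β' γ' = c * dHp β γ ∧
    dA a β β' ≤ max (|c ^ a - 1| * totalDiversity a β) (|c - 1| * β.length) ∧
    min c (c ^ a) * dA a β γ ≤ dA a β' γ' ∧
    dA a β' γ' ≤ max c (c ^ a) * dA a β γ := by
  have hc' : 0 < c⁻¹ := inv_pos.2 hc
  have hβi := isScaled_inv hc hβ'
  have hγi := isScaled_inv hc hγ'
  refine ⟨dHp_self_scale hc hβ', le_antisymm (dHp_scale_le hc hβ' hγ') ?_,
    dA_self_scale ha' hc hβ hβ', ?_, dA_scale_le hc hβ hγ hβ' hγ'⟩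
  · have := dHp_scale_le hc' hβi hγi
    rwa [← div_eq_inv_mul, le_div_iff₀' hc] at this
  · have hle := dA_scale_le hc' (hasDiversityProp_scale hc hβ' hβ) (hasDiversityProp_scale hc hγ' hγ)
      hβi hγi
    have hca : 0 < c ^ a := Real.rpow_pos_of_pos hc a
    have hm : 0 < min c (c ^ a) := lt_min hc hca
    have hmax : max c⁻¹ (c⁻¹ ^ a) = (min c (c ^ a))⁻¹ := by
      rw [Real.inv_rpow hc.le]
      rcases le_total c (c ^ a) with h | h
      · rw [min_eq_left h, max_eq_left (inv_anti₀ hc h)]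
      · rw [min_eq_right h, max_eq_right (inv_anti₀ hca h)]
    rwa [hmax, ← div_eq_inv_mul, le_div_iff₀' hm] at hle
end
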